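/- arXiv:2307.13299 — 4 statements merged into one kernel-verified Lean document; each statement's English description precedes it below -/
import Mathlib

section
/- For every strategy Z, the restriction map sending a path s to its tuple of chance-node states (s_k)_{k∈C} is a bijection from S(Z) onto ∏_{k∈C} S_k; in particular, the number of paths compatible with Z is |S(Z)| = ∏_{k∈C} |S_k|. -/
/-!
STATEMENT 1: For every strategy Z, the restriction map sending a path s to its tuple
of chance-node states (s_k)_{k∈C} is a bijection from S(Z) onto ∏_{k∈C} S_k;
in particular, |S(Z)| = ∏_{k∈C} |S_k|.
-/

open Finset

attribute [local instance] Classical.propDecidable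

/-- Restriction of a path `s` to the information set `I j` of node `j`. -/
def restrict {n : ℕ} {S : Fin n → Type} (I : Fin n → Finset (Fin n))
    (s : ∀ j, S j) (j : Fin n) : ∀ i : (I j), S i.1 :=
  fun i => s i.1

/-!
Fixing the chance outcomes turns every node into a deterministic function of its information set:
a constant at chance nodes, `Z j` at decision nodes. Since information sets only look backwards,
well-founded recursion produces exactly one path obeying all these functions, and the paths obeying
them are precisely the paths compatible with `Z` that have the given chance outcomes.
-/

section WellFoundedInformation

variable {ι : Type*} {S : ι → Type*} {I : ι → Set ι} {C D : Set ι}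

theorem existsUnique_forall_domRestrict_eq (hI : WellFounded fun i j ↦ i ∈ I j)
    (F : ∀ j, (∀ i : I j, S i) → S j) :
    ∃! s : ∀ j, S j, ∀ j, F j ((I j).domRestrict s) = s j := by
  let step (j : ι) (past : ∀ i, i ∈ I j → S i) : S j := F j fun i ↦ past i i.2
  refine ⟨hI.fix step, fun j ↦ (hI.fix_eq step j).symm, fun t ht ↦ funext fun j ↦ ?_⟩
  induction j using hI.induction with
  | _ j ih =>
    rw [hI.fix_eq, ← ht j]
    exact congrArg (F j) (funext fun i ↦ ih i i.2)

/-- The set `S(Z)` of paths that follow the strategy `Z` at every decision node `j ∈ D`.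
The family `Z` is total for convenience; its members outside `D` are ignored. -/
def compatiblePaths (D : Set ι) (Z : ∀ j, (∀ i : I j, S i) → S j) : Set (∀ j, S j) :=
  {s | ∀ j ∈ D, Z j ((I j).domRestrict s) = s j}

/-- The strategy `Z` with its local functions at the chance nodes `k ∈ C` replaced by the constants
`c k`, so that an outcome of chance and a strategy together determine every node. -/
noncomputable def fixChance (c : ∀ k : C, S k) (Z : ∀ j, (∀ i : I j, S i) → S j) (j : ι)
    (x : ∀ i : I j, S i) : S j :=
  if hj : j ∈ C then c ⟨j, hj⟩ else Z j x

theorem forall_fixChance_eq_iff (hCD : IsCompl C D) (c : ∀ k : C, S k)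
    (Z : ∀ j, (∀ i : I j, S i) → S j) (s : ∀ j, S j) :
    (∀ j, fixChance c Z j ((I j).domRestrict s) = s j) ↔
      s ∈ compatiblePaths D Z ∧ C.domRestrict s = c := by
  obtain rfl : Cᶜ = D := hCD.compl_eq
  constructor
  · intro hs
    refine ⟨fun j hj ↦ ?_, funext fun k ↦ ?_⟩
    · rw [← hs j, fixChance, dif_neg hj]
    · rw [Set.domRestrict_apply, ← hs k, fixChance, dif_pos k.2]
  · rintro ⟨hs, rfl⟩ j
    by_cases hj : j ∈ C
    · exact dif_pos hj
    · rw [fixChance, dif_neg hj, hs j hj]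

theorem compatible_paths_bijection_general (hI : WellFounded fun i j ↦ i ∈ I j)
    (hCD : IsCompl C D) (Z : ∀ j, (∀ i : I j, S i) → S j) :
    Function.Bijective fun s : compatiblePaths D Z ↦ C.domRestrict s.1 := by
  refine (Function.bijective_iff_existsUnique _).mpr fun c ↦ ?_
  obtain ⟨s, hs, hs_unique⟩ := existsUnique_forall_domRestrict_eq hI (fixChance c Z)
  obtain ⟨hsZ, hsc⟩ := (forall_fixChance_eq_iff hCD c Z s).mp hs
  exact ⟨⟨s, hsZ⟩, hsc, fun t htc ↦
    Subtype.ext <| hs_unique t <| (forall_fixChance_eq_iff hCD c Z t).mpr ⟨t.2, htc⟩⟩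

theorem card_compatiblePaths (hI : WellFounded fun i j ↦ i ∈ I j) (hCD : IsCompl C D)
    (Z : ∀ j, (∀ i : I j, S i) → S j) {_ : Fintype (compatiblePaths D Z)} [Fintype C]
    [∀ k : C, Fintype (S k)] :
    Fintype.card (compatiblePaths D Z) = ∏ k : C, Fintype.card (S k) :=
  (Fintype.card_of_bijective (compatible_paths_bijection_general hI hCD Z)).trans Fintype.card_pi

end WellFoundedInformation

theorem compatible_paths_bijection {n : ℕ}
    (S : Fin n → Type) [∀ j, Fintype (S j)] [∀ j, Nonempty (S j)]
    (C D : Finset (Fin n)) (hCD : Disjoint C D) (hCDunion : C ∪ D = Finset.univ)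
    (I : Fin n → Finset (Fin n)) (hI : ∀ j, ∀ i ∈ I j, i < j)
    (Z : ∀ j : Fin n, (∀ i : (I j), S i.1) → S j) :
    Function.Bijective
      (fun (s : {s : ∀ j, S j // ∀ j ∈ D, Z j (restrict I s j) = s j}) (k : C) =>
        s.1 k.1)
    ∧ (Finset.univ.filter
        (fun s : ∀ j, S j => ∀ j ∈ D, Z j (restrict I s j) = s j)).card
      = ∏ k ∈ C, Fintype.card (S k) := by
  have hI_wf : WellFounded fun i j ↦ i ∈ (I j : Set (Fin n)) :=
    wellFounded_lt.mono fun i j hij ↦ hI j i hij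
  have hCD_compl : IsCompl (C : Set (Fin n)) D :=
    ⟨disjoint_coe.mpr hCD, codisjoint_iff.mpr (by simp [← coe_union, hCDunion])⟩
  refine ⟨compatible_paths_bijection_general hI_wf hCD_compl Z, ?_⟩
  rw [← Fintype.card_subtype, ← prod_coe_sort]
  exact card_compatiblePaths hI_wf hCD_compl Z
end

section
/- Bound on locally compatible active paths: for every strategy Z, every decision node j ∈ D, every s_j ∈ S_j and every s_{I(j)} ∈ S_{I(j)}, the number of paths that are compatible with Z and have the states at node j and at the nodes of I(j) fixed satisfies |S_{s_j|s_{I(j)}} ∩ S(Z)| ≤ ∏_{k ∈ C \ ({j} ∪ I(j))} |S_k|, which equals |S_{s_j|s_{I(j)}}| / ∏_{k ∈ D \ ({j} ∪ I(j))} |S_k|. -/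
/-!
STATEMENT 4: Bound on locally compatible active paths: for every strategy Z, every
decision node j ∈ D, every s_j ∈ S_j and every s_{I(j)} ∈ S_{I(j)},
|S_{s_j|s_{I(j)}} ∩ S(Z)| ≤ ∏_{k ∈ C \ ({j} ∪ I(j))} |S_k|,
which equals |S_{s_j|s_{I(j)}}| / ∏_{k ∈ D \ ({j} ∪ I(j))} |S_k|.
-/

open Finset

attribute [local instance] Classical.propDecidable

/-!
Along the topological order, each decision state of a compatible path is a function of earlier
states, so a compatible path is determined by its chance states. Among compatible paths with
prescribed states on `A`, restriction to `C \ A` is therefore injective.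
-/

section Compatible

variable {ι : Type*} {S : ι → Type*}

/-- A path `s` is compatible with the strategy `Z` when every decision node `k ∈ D` takes the state
that `Z` prescribes on the information set `I k`. As `Z` and `I` are indexed by all nodes, their
values at chance nodes are irrelevant. -/
def IsCompatible (D : Finset ι) (I : ι → Finset ι) (Z : ∀ k, (∀ i : I k, S i) → S k)
    (s : ∀ k, S k) : Prop :=
  ∀ k ∈ D, Z k ((I k).restrict s) = s k

theorem IsCompatible.eq_of_forall_notMem [LT ι] [WellFoundedLT ι] {D : Finset ι}
    {I : ι → Finset ι} {Z : ∀ k, (∀ i : I k, S i) → S k} {s t : ∀ k, S k}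
    (hI : ∀ k ∈ D, ∀ i ∈ I k, i < k) (hs : IsCompatible D I Z s) (ht : IsCompatible D I Z t)
    (hst : ∀ k ∉ D, s k = t k) : s = t := by
  funext k
  induction k using WellFoundedLT.induction with
  | _ k ih =>
    by_cases hk : k ∈ D
    · have same_information : (I k).restrict s = (I k).restrict t :=
        funext fun i => ih i (hI k hk i i.2)
      rw [← hs k hk, ← ht k hk, same_information]
    · exact hst k hk

variable [Fintype ι] [DecidableEq ι] [∀ k, Fintype (S k)]

theorem card_filter_restrict_eq_and_isCompatible_le [LT ι] [WellFoundedLT ι] {C D : Finset ι}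
    (hCDunion : C ∪ D = univ) {I : ι → Finset ι} (hI : ∀ k ∈ D, ∀ i ∈ I k, i < k)
    (Z : ∀ k, (∀ i : I k, S i) → S k) (A : Finset ι) (a : ∀ i : A, S i) :
    #{s : ∀ k, S k | A.restrict s = a ∧ IsCompatible D I Z s} ≤
      ∏ k ∈ C \ A, Fintype.card (S k) := by
  have restrict_injOn : Set.InjOn (C \ A).restrict
      {s : ∀ k, S k | A.restrict s = a ∧ IsCompatible D I Z s} := by
    rintro s ⟨hsA, hs⟩ t ⟨htA, ht⟩ hst
    refine hs.eq_of_forall_notMem hI ht fun k hkD => ?_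
    by_cases hkA : k ∈ A
    · exact congrFun (hsA.trans htA.symm) ⟨k, hkA⟩
    · have hkC : k ∈ C := (mem_union.1 (hCDunion ▸ mem_univ k)).resolve_right hkD
      exact congrFun hst ⟨k, mem_sdiff.2 ⟨hkC, hkA⟩⟩
  calc #{s : ∀ k, S k | A.restrict s = a ∧ IsCompatible D I Z s}
      ≤ #(univ : Finset (∀ k : ↥(C \ A), S k)) :=
        card_le_card_of_injOn (C \ A).restrict (fun _ _ => mem_univ _)
          (by simpa only [coe_filter_univ] using restrict_injOn)
    _ = ∏ k : ↥(C \ A), Fintype.card (S k) := by rw [card_univ, Fintype.card_pi]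
    _ = ∏ k ∈ C \ A, Fintype.card (S k) := prod_coe_sort _ fun k => Fintype.card (S k)

theorem card_filter_restrict_eq (A : Finset ι) (a : ∀ i : A, S i) :
    #{s : ∀ k, S k | A.restrict s = a} = ∏ k ∈ Aᶜ, Fintype.card (S k) := by
  have filter_eq_piFinset : ({s : ∀ k, S k | A.restrict s = a} : Finset _) =
      Fintype.piFinset fun k => if hk : k ∈ A then {a ⟨k, hk⟩} else univ := by
    ext s
    simp only [mem_filter_univ, Fintype.mem_piFinset, funext_iff, Subtype.forall, restrict_def]
    refine forall_congr' fun k => ?_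
    by_cases hk : k ∈ A <;> simp [hk]
  rw [filter_eq_piFinset, Fintype.card_piFinset, ← prod_subset (subset_univ Aᶜ)]
  · exact prod_congr rfl fun k hk => by rw [dif_neg (mem_compl.1 hk), card_univ]
  · intro k _ hk
    rw [dif_pos (notMem_compl.1 hk), card_singleton]

theorem card_filter_restrict_eq_div [∀ k, Nonempty (S k)] {C D : Finset ι} (hCD : Disjoint C D)
    (hCDunion : C ∪ D = univ) (A : Finset ι) (a : ∀ i : A, S i) :
    #{s : ∀ k, S k | A.restrict s = a} / ∏ k ∈ D \ A, Fintype.card (S k) =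
      ∏ k ∈ C \ A, Fintype.card (S k) := by
  have compl_eq : Aᶜ = C \ A ∪ D \ A := by
    rw [← union_sdiff_distrib, hCDunion, compl_eq_univ_sdiff]
  have free_nodes_disjoint : Disjoint (C \ A) (D \ A) := hCD.mono sdiff_subset sdiff_subset
  rw [card_filter_restrict_eq, compl_eq, prod_union free_nodes_disjoint]
  exact Nat.mul_div_cancel _ (prod_pos fun k _ => Fintype.card_pos)

end Compatible

theorem exists_restrict_insert_eq_iff {ι : Type*} [DecidableEq ι] {S : ι → Type*} {j : ι}
    {B : Finset ι} (hj : j ∉ B) (sj : S j) (b : ∀ i : B, S i) :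
    ∃ a : ∀ i : ↥(insert j B), S i, ∀ s : ∀ k, S k,
      (insert j B).restrict s = a ↔ s j = sj ∧ B.restrict s = b := by
  refine ⟨fun i => prodPiInsert S (sj, fun k hk => b ⟨k, hk⟩) i i.2, fun s => ?_⟩
  simp only [funext_iff, Subtype.forall, restrict_def, prodPiInsert]
  grind

theorem locally_compatible_active_paths_bound_general {ι : Type*} [Fintype ι] [DecidableEq ι]
    [LT ι] [WellFoundedLT ι] (S : ι → Type*) [∀ k, Fintype (S k)] [∀ k, Nonempty (S k)]
    (C D : Finset ι) (hCD : Disjoint C D) (hCDunion : C ∪ D = univ)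
    (I : ι → Finset ι) (hI : ∀ k ∈ D, ∀ i ∈ I k, i < k)
    (Z : ∀ k, (∀ i : I k, S i) → S k) (A : Finset ι) (a : ∀ i : A, S i) :
    #{s : ∀ k, S k | A.restrict s = a ∧ IsCompatible D I Z s} ≤
        ∏ k ∈ C \ A, Fintype.card (S k)
      ∧ ∏ k ∈ C \ A, Fintype.card (S k) =
        #{s : ∀ k, S k | A.restrict s = a} / ∏ k ∈ D \ A, Fintype.card (S k) :=
  ⟨card_filter_restrict_eq_and_isCompatible_le hCDunion hI Z A a,
    (card_filter_restrict_eq_div hCD hCDunion A a).symm⟩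

theorem locally_compatible_active_paths_bound {n : ℕ}
    (S : Fin n → Type) [∀ j, Fintype (S j)] [∀ j, Nonempty (S j)]
    (C D : Finset (Fin n)) (hCD : Disjoint C D) (hCDunion : C ∪ D = Finset.univ)
    (I : Fin n → Finset (Fin n)) (hI : ∀ j, ∀ i ∈ I j, i < j)
    (Z : ∀ j : Fin n, (∀ i : (I j), S i.1) → S j)
    (j : Fin n) (hj : j ∈ D) (sj : S j) (sI : ∀ i : (I j), S i.1) :
    (Finset.univ.filter (fun s : ∀ k, S k =>
        (s j = sj ∧ restrict I s j = sI) ∧ ∀ k ∈ D, Z k (restrict I s k) = s k)).card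
      ≤ ∏ k ∈ C \ insert j (I j), Fintype.card (S k)
    ∧ ∏ k ∈ C \ insert j (I j), Fintype.card (S k)
      = (Finset.univ.filter
          (fun s : ∀ k, S k => s j = sj ∧ restrict I s j = sI)).card
        / ∏ k ∈ D \ insert j (I j), Fintype.card (S k) := by
  obtain ⟨a, ha⟩ := exists_restrict_insert_eq_iff (fun h => (hI j j h).false) sj sI
  convert locally_compatible_active_paths_bound_general S C D hCD hCDunion I (fun k _ => hI k) Z _ a
    using 5
  exacts [(ha _).symm, Iff.rfl, (ha _).symm]
end

section
/- Characterization of the feasible conditional path probabilities in the original formulation: fix a strategy Z with induced binary variables z. A function π : S → ℝ satisfies (i) 0 ≤ π(s) ≤ p(s) for all s ∈ S, (ii) π(s) ≤ z(s_j | s_{I(j)}) for all j ∈ D and all s ∈ S, and (iii) π(s) ≥ p(s) + ∑_{j∈D} z(s_j | s_{I(j)}) − |D| for all s ∈ S, if and only if π(s) = p(s) for every path s compatible with Z and π(s) = 0 for every path s not compatible with Z. -/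
/-!
STATEMENT 7: Characterization of the feasible conditional path probabilities in the
original formulation: fix a strategy Z with induced binary variables z.
A function π : S → ℝ satisfies
(i) 0 ≤ π(s) ≤ p(s) for all s ∈ S,
(ii) π(s) ≤ z(s_j | s_{I(j)}) for all j ∈ D and all s ∈ S, and
(iii) π(s) ≥ p(s) + ∑_{j∈D} z(s_j | s_{I(j)}) − |D| for all s ∈ S,
if and only if π(s) = p(s) for every path s compatible with Z and π(s) = 0 for every
path s not compatible with Z.
-/

open Finset

attribute [local instance] Classical.propDecidable

/-- The path probability `p(s) = ∏_{j ∈ C} P(s_j | s_{I(j)})`. -/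
def pathProb {n : ℕ} {S : Fin n → Type} (C : Finset (Fin n))
    (I : Fin n → Finset (Fin n))
    (P : ∀ j : Fin n, (∀ i : (I j), S i.1) → S j → ℝ)
    (s : ∀ j, S j) : ℝ :=
  ∏ j ∈ C, P j (restrict I s j) (s j)

/-!
The constraints decouple over paths. Along a path `s` the sum in (iii) counts the decision nodes at
which `s` follows the strategy. If all of them do, the sum cancels `|D|` and (iii) reads
`p s ≤ π s`, which is the converse of (i). If some node deviates, then (ii) at that node forces
`π s ≤ 0`, while the sum is at most `|D| - 1`, so (iii) holds at `π s = 0` because `p s ≤ 1`.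
-/

theorem sum_boole_add_one_le_card_of_not_forall {ι R : Type*} [Semiring R] [PartialOrder R]
    [IsOrderedRing R] {s : Finset ι} {q : ι → Prop} [DecidablePred q] (h : ¬ ∀ i ∈ s, q i) :
    (∑ i ∈ s, if q i then (1 : R) else 0) + 1 ≤ #s := by
  have card_filter_lt : #{i ∈ s | q i} < #s :=
    card_lt_card (filter_ssubset.2 (by simpa using h))
  rw [sum_boole]
  exact_mod_cast Nat.mono_cast (α := R) card_filter_lt

/-- The constraints (i)–(iii) on the value `x` of `π` at a single path of probability `p`.
`Follows j` says that the path takes the state prescribed by the strategy at the decision node `j`,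
so its indicator is the binary variable `z` of that node. -/
def IsFeasibleValue {ι R : Type*} [Ring R] [LE R] (D : Finset ι) (Follows : ι → Prop)
    [DecidablePred Follows] (p x : R) : Prop :=
  (0 ≤ x ∧ x ≤ p) ∧ (∀ j ∈ D, x ≤ if Follows j then 1 else 0) ∧
    x ≥ p + (∑ j ∈ D, if Follows j then 1 else 0) - #D

namespace IsFeasibleValue

variable {ι R : Type*} [Ring R] [PartialOrder R] {D : Finset ι} {Follows : ι → Prop}
  [DecidablePred Follows] {p x : R}

theorem iff_eq_of_forall (hp : p ∈ Set.Icc 0 1) (h : ∀ j ∈ D, Follows j) :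
    IsFeasibleValue D Follows p x ↔ x = p := by
  have sum_eq_card : (∑ j ∈ D, if Follows j then (1 : R) else 0) = #D := by
    rw [sum_boole, filter_true_of_mem h]
  rw [IsFeasibleValue, sum_eq_card, add_sub_cancel_right]
  constructor
  · rintro ⟨⟨-, hxp⟩, -, hpx⟩
    exact hxp.antisymm hpx
  · rintro rfl
    exact ⟨⟨hp.1, le_rfl⟩, fun j hj => hp.2.trans_eq (if_pos (h j hj)).symm, le_rfl⟩

variable [IsOrderedRing R]

theorem iff_eq_zero_of_not_forall (hp : p ∈ Set.Icc 0 1) (h : ¬ ∀ j ∈ D, Follows j) :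
    IsFeasibleValue D Follows p x ↔ x = 0 := by
  constructor
  · rintro ⟨⟨hx, -⟩, hxz, -⟩
    push Not at h
    obtain ⟨j, hj, hdev⟩ := h
    exact ((hxz j hj).trans_eq (if_neg hdev)).antisymm hx
  · rintro rfl
    refine ⟨⟨le_rfl, hp.1⟩, fun j _ => ?_, sub_nonpos.2 ?_⟩
    · split_ifs
      exacts [zero_le_one, le_rfl]
    · calc p + ∑ j ∈ D, (if Follows j then 1 else 0)
          ≤ 1 + ∑ j ∈ D, (if Follows j then 1 else 0) := add_le_add_left hp.2 _
        _ = (∑ j ∈ D, if Follows j then 1 else 0) + 1 := add_comm _ _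
        _ ≤ #D := sum_boole_add_one_le_card_of_not_forall h

theorem iff_forall_imp_and_not_forall_imp (hp : p ∈ Set.Icc 0 1) :
    IsFeasibleValue D Follows p x ↔
      ((∀ j ∈ D, Follows j) → x = p) ∧ (¬ (∀ j ∈ D, Follows j) → x = 0) := by
  by_cases h : ∀ j ∈ D, Follows j
  · rw [iff_eq_of_forall hp h]
    exact ⟨fun hx => ⟨fun _ => hx, absurd h⟩, fun hx => hx.1 h⟩
  · rw [iff_eq_zero_of_not_forall hp h]
    exact ⟨fun hx => ⟨fun hall => absurd hall h, fun _ => hx⟩, fun hx => hx.2 h⟩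

end IsFeasibleValue

theorem pathProb_mem_Icc {n : ℕ} {S : Fin n → Type} [∀ j, Fintype (S j)] {C : Finset (Fin n)}
    {I : Fin n → Finset (Fin n)} {P : ∀ j : Fin n, (∀ i : (I j), S i.1) → S j → ℝ}
    (hP : ∀ j ∈ C, ∀ sI, P j sI ∈ stdSimplex ℝ (S j)) (s : ∀ j, S j) :
    pathProb C I P s ∈ Set.Icc 0 1 :=
  unitInterval.prod_mem fun j hj => mem_Icc_of_mem_stdSimplex (hP j hj (restrict I s j)) (s j)

theorem pi_characterization_general {X ι R : Type*} [Ring R] [PartialOrder R] [IsOrderedRing R]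
    (D : Finset ι) (Follows : X → ι → Prop) [∀ s, DecidablePred (Follows s)] {p : X → R}
    (hp : ∀ s, p s ∈ Set.Icc 0 1) (π : X → R) :
    ((∀ s, 0 ≤ π s ∧ π s ≤ p s) ∧
     (∀ j ∈ D, ∀ s, π s ≤ if Follows s j then 1 else 0) ∧
     (∀ s, π s ≥ p s + (∑ j ∈ D, if Follows s j then 1 else 0) - #D))
    ↔ (∀ s,
        ((∀ j ∈ D, Follows s j) → π s = p s) ∧
        (¬ (∀ j ∈ D, Follows s j) → π s = 0)) := by
  simp only [← IsFeasibleValue.iff_forall_imp_and_not_forall_imp (hp _), IsFeasibleValue,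
    forall_and]
  exact and_congr_right' (and_congr_left' ⟨fun h s j hj => h j hj s, fun h j hj s => h s j hj⟩)

theorem pi_characterization {n : ℕ}
    (S : Fin n → Type) [∀ j, Fintype (S j)] [∀ j, Nonempty (S j)]
    (C D : Finset (Fin n)) (hCD : Disjoint C D) (hCDunion : C ∪ D = Finset.univ)
    (I : Fin n → Finset (Fin n)) (hI : ∀ j, ∀ i ∈ I j, i < j)
    (P : ∀ j : Fin n, (∀ i : (I j), S i.1) → S j → ℝ)
    (hPnonneg : ∀ j ∈ C, ∀ (sI : ∀ i : (I j), S i.1) (sj : S j), 0 ≤ P j sI sj)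
    (hPsum : ∀ j ∈ C, ∀ sI : ∀ i : (I j), S i.1, ∑ sj : S j, P j sI sj = 1)
    (Z : ∀ j : Fin n, (∀ i : (I j), S i.1) → S j)
    (π : (∀ j, S j) → ℝ) :
    ((∀ s : ∀ j, S j, 0 ≤ π s ∧ π s ≤ pathProb C I P s) ∧
     (∀ j ∈ D, ∀ s : ∀ j, S j,
        π s ≤ if Z j (restrict I s j) = s j then (1 : ℝ) else 0) ∧
     (∀ s : ∀ j, S j,
        π s ≥ pathProb C I P s
          + (∑ j ∈ D, if Z j (restrict I s j) = s j then (1 : ℝ) else 0)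
          - (D.card : ℝ)))
    ↔ (∀ s : ∀ j, S j,
        ((∀ j ∈ D, Z j (restrict I s j) = s j) → π s = pathProb C I P s) ∧
        (¬ (∀ j ∈ D, Z j (restrict I s j) = s j) → π s = 0)) := by
  exact pi_characterization_general D (fun s j => Z j (restrict I s j) = s j)
    (pathProb_mem_Icc fun j hj sI => ⟨hPnonneg j hj sI, hPsum j hj sI⟩) π
end

section
/- Feasibility of the indicator solution in the improved formulation: let S* ⊆ S be a subset of paths containing every path s with p(s) > 0. Fix a strategy Z, let z be its induced binary variables, and define x : S* → ℝ by x(s) = 1 if s is compatible with Z and x(s) = 0 otherwise. Then (i) ∑_{s_j∈S_j} z(s_j | s_{I(j)}) = 1 for every j ∈ D and s_{I(j)} ∈ S_{I(j)}; (ii) ∑_{s ∈ S* ∩ S_{s_j|s_{I(j)}}} x(s) ≤ Γ(s_j|s_{I(j)}) · z(s_j | s_{I(j)}) for every j ∈ D, s_j ∈ S_j, s_{I(j)} ∈ S_{I(j)}, where Γ(s_j|s_{I(j)}) = min{ |S* ∩ S_{s_j|s_{I(j)}}|, ∏_{k ∈ C \ ({j} ∪ I(j))} |S_k| }; (iii)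 ∑_{s∈S*} p(s)x(s) = 1; and (iv) 0 ≤ x(s) ≤ 1 for all s ∈ S*. -/
/-!
STATEMENT 10: Feasibility of the indicator solution in the improved formulation:
let S* ⊆ S be a subset of paths containing every path s with p(s) > 0. Fix a strategy
Z, let z be its induced binary variables, and define x : S* → ℝ by x(s) = 1 if s is
compatible with Z and x(s) = 0 otherwise. Then
(i) ∑_{s_j∈S_j} z(s_j | s_{I(j)}) = 1 for every j ∈ D and s_{I(j)} ∈ S_{I(j)};
(ii) ∑_{s ∈ S* ∩ S_{s_j|s_{I(j)}}} x(s) ≤ Γ(s_j|s_{I(j)}) · z(s_j | s_{I(j)}) for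
every j ∈ D, s_j ∈ S_j, s_{I(j)} ∈ S_{I(j)}, where
Γ(s_j|s_{I(j)}) = min{ |S* ∩ S_{s_j|s_{I(j)}}|, ∏_{k ∈ C \ ({j} ∪ I(j))} |S_k| };
(iii) ∑_{s∈S*} p(s)x(s) = 1; and (iv) 0 ≤ x(s) ≤ 1 for all s ∈ S*.
-/

open Finset

attribute [local instance] Classical.propDecidable

/-!
Turn every decision node into a chance node that puts all its mass on the prescribed state. The path
probabilities of the resulting diagram are `p(s) x(s)`, so (iii) says that they sum to one: sum out
the nodes from the last to the first, each contributing a factor `1`. For (ii), a compatible path is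
determined by its states at the chance nodes, because its decisions can be read off in topological
order; once `s_j` and `s_{I(j)}` are fixed, only the chance nodes outside `{j} ∪ I(j)` remain free.
-/

section Path

variable {ι : Type*} {S : ι → Type*}

theorem eq_of_eqOn_of_dependsOn_Iio [Preorder ι] [WellFoundedLT ι]
    {d : ∀ j, (∀ i, S i) → S j} {C : Set ι} {s t : ∀ i, S i}
    (hd : ∀ j ∉ C, DependsOn (d j) (Set.Iio j))
    (hs : ∀ j ∉ C, d j s = s j) (ht : ∀ j ∉ C, d j t = t j)
    (hst : ∀ j ∈ C, s j = t j) : s = t := by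
  funext j
  induction j using WellFoundedLT.induction with
  | ind j ih =>
    by_cases hj : j ∈ C
    · exact hst j hj
    · rw [← hs j hj, ← ht j hj]
      exact hd j hj ih

variable [DecidableEq ι]

theorem card_le_prod_card_of_dependsOn_Iio [Preorder ι] [WellFoundedLT ι] [∀ i, Fintype (S i)]
    {d : ∀ j, (∀ i, S i) → S j} {A C : Finset ι} {U : Finset (∀ i, S i)}
    (hd : ∀ j ∉ C, DependsOn (d j) (Set.Iio j))
    (hU : ∀ s ∈ U, ∀ j ∉ C, d j s = s j)
    (hA : ∀ s ∈ U, ∀ t ∈ U, ∀ i ∈ A, s i = t i) :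
    #U ≤ ∏ k ∈ C \ A, Fintype.card (S k) := by
  have hinj : Set.InjOn (C \ A).restrict (U : Set (∀ i, S i)) := by
    intro s hs t ht hst
    refine eq_of_eqOn_of_dependsOn_Iio (C := C) hd (hU s hs) (hU t ht) fun j hj => ?_
    by_cases hjA : j ∈ A
    · exact hA s hs t ht j hjA
    · exact congrFun hst ⟨j, mem_sdiff.2 ⟨hj, hjA⟩⟩
  calc #U ≤ Fintype.card (∀ k : ↥(C \ A), S k) :=
        card_le_card_of_injOn _ (fun _ _ => mem_coe.2 (mem_univ _)) hinj
    _ = ∏ k ∈ C \ A, Fintype.card (S k) := by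
        rw [Fintype.card_pi, prod_coe_sort _ fun k => Fintype.card (S k)]

variable [Fintype ι] [∀ i, Fintype (S i)]

theorem sum_filter_eq_off_insert {M : Type*} [AddCommMonoid M] {T : Finset ι} {a : ι} (ha : a ∉ T)
    (r : ∀ i, S i) (g : (∀ i, S i) → M) :
    ∑ s with ∀ i ∉ insert a T, s i = r i, g s
      = ∑ s with ∀ i ∉ T, s i = r i, ∑ b : S a, g (Function.update s a b) := by
  rw [← sum_product']
  refine sum_nbij' (fun s => (Function.update s a (r a), s a))
    (fun q => Function.update q.1 a q.2) ?_ ?_ ?_ ?_ ?_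
  · simp only [mem_filter_univ, mem_product, mem_univ, and_true]
    intro s hs i hi
    rcases eq_or_ne i a with rfl | hia
    · exact Function.update_self ..
    · rw [Function.update_of_ne hia, hs i (by simp [hia, hi])]
  · simp only [mem_filter_univ, mem_product, mem_univ, and_true]
    rintro ⟨s, b⟩ hs i hi
    rw [mem_insert, not_or] at hi
    rw [Function.update_of_ne hi.1, hs i hi.2]
  · simp
  · rintro ⟨s, b⟩ hs
    have hsa : s a = r a := (mem_filter_univ _).1 (mem_product.1 hs).1 a ha
    simp [← hsa]
  · simp

theorem sum_prod_eq_one_of_dependsOn_Iic [LinearOrder ι] [∀ i, Nonempty (S i)]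
    {R : Type*} [CommSemiring R] {f : ι → (∀ i, S i) → R}
    (hf : ∀ j, DependsOn (f j) (Set.Iic j))
    (hsum : ∀ j s, ∑ b : S j, f j (Function.update s j b) = 1) :
    ∑ s, ∏ j, f j s = 1 := by
  let r : ∀ i, S i := fun i => Classical.arbitrary (S i)
  suffices h : ∀ T : Finset ι, ∑ s with ∀ i ∉ T, s i = r i, ∏ j ∈ T, f j s = 1 by
    simpa using h univ
  intro T
  induction T using Finset.induction_on_max with
  | empty => simp [← funext_iff, filter_eq']
  | insert a T hT ih =>
    have ha : a ∉ T := fun h => lt_irrefl a (hT a h)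
    have hupdate : ∀ s b, ∏ j ∈ T, f j (Function.update s a b) = ∏ j ∈ T, f j s := fun s b =>
      prod_congr rfl fun j hj => hf j fun i hi =>
        Function.update_of_ne (lt_of_le_of_lt hi (hT j hj)).ne _ _
    rw [sum_filter_eq_off_insert ha, ← ih]
    refine sum_congr rfl fun s _ => ?_
    simp only [prod_insert ha, hupdate]
    rw [← sum_mul, hsum, one_mul]

end Path

section InfluenceDiagram

variable {n : ℕ} {S : Fin n → Type} {I : Fin n → Finset (Fin n)}

/-- Compatibility of the path `s` with the strategy `Z` at the decision nodes `D`. The strategy is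
given by a local decision function at every node; only those at `D` matter. -/
abbrev Compatible (D : Finset (Fin n)) (I : Fin n → Finset (Fin n))
    (Z : ∀ j : Fin n, (∀ i : I j, S i) → S j) (s : ∀ j, S j) : Prop :=
  ∀ j ∈ D, Z j (restrict I s j) = s j

/-- The conditional probabilities induced by the strategy `Z`: those of the diagram at the chance
nodes `C`, and the point mass at the state prescribed by `Z` at the other nodes. -/
noncomputable def inducedProb (C : Finset (Fin n)) (P : ∀ j : Fin n, (∀ i : I j, S i) → S j → ℝ)
    (Z : ∀ j : Fin n, (∀ i : I j, S i) → S j) (j : Fin n) (sI : ∀ i : I j, S i) (sj : S j) : ℝ :=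
  if j ∈ C then P j sI sj else if Z j sI = sj then 1 else 0

variable {C : Finset (Fin n)} {P : ∀ j : Fin n, (∀ i : I j, S i) → S j → ℝ}
  {Z : ∀ j : Fin n, (∀ i : I j, S i) → S j}

theorem restrict_dependsOn_Iio (hI : ∀ j, ∀ i ∈ I j, i < j) (j : Fin n) :
    DependsOn (fun s : ∀ i, S i => restrict I s j) (Set.Iio j) :=
  (Finset.dependsOn_restrict (I j)).mono (hI j)

theorem pathProb_nonneg (hP : ∀ j ∈ C, ∀ sI sj, 0 ≤ P j sI sj) (s : ∀ j, S j) :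
    0 ≤ pathProb C I P s :=
  prod_nonneg fun j hj => hP j hj _ _

theorem pathProb_mul_indicator_compatible (s : ∀ j, S j) :
    pathProb C I P s * (if Compatible Cᶜ I Z s then 1 else 0)
      = pathProb univ I (inducedProb C P Z) s := by
  have hC : pathProb C I (inducedProb C P Z) s = pathProb C I P s :=
    prod_congr rfl fun j hj => if_pos hj
  have hD : pathProb Cᶜ I (inducedProb C P Z) s = if Compatible Cᶜ I Z s then 1 else 0 :=
    calc pathProb Cᶜ I (inducedProb C P Z) s
        = ∏ j ∈ Cᶜ, if Z j (restrict I s j) = s j then 1 else 0 :=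
          prod_congr rfl fun j hj => if_neg (mem_compl.1 hj)
      _ = if Compatible Cᶜ I Z s then 1 else 0 := by
          rw [prod_ite_zero]
          congr 1
          exact prod_const_one
  rw [← hC, ← hD]
  exact prod_mul_prod_compl C _

variable [∀ j, Fintype (S j)]

theorem sum_inducedProb_eq_one (hP : ∀ j ∈ C, ∀ sI, ∑ sj, P j sI sj = 1)
    (j : Fin n) (sI : ∀ i : I j, S i) : ∑ sj, inducedProb C P Z j sI sj = 1 := by
  by_cases hj : j ∈ C
  · simpa only [inducedProb, if_pos hj] using hP j hj sI
  · simp [inducedProb, hj]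

theorem sum_pathProb_univ_eq_one [∀ j, Nonempty (S j)] (hI : ∀ j, ∀ i ∈ I j, i < j)
    {Q : ∀ j : Fin n, (∀ i : I j, S i) → S j → ℝ} (hQ : ∀ j sI, ∑ sj, Q j sI sj = 1) :
    ∑ s, pathProb univ I Q s = 1 := by
  refine sum_prod_eq_one_of_dependsOn_Iic (f := fun j s => Q j (restrict I s j) (s j))
    (fun j s t hst => ?_) fun j s => ?_
  · have hj : s j = t j := hst j Set.self_mem_Iic
    have hIj : restrict I s j = restrict I t j :=
      restrict_dependsOn_Iio hI j fun i hi => hst i (Set.Iio_subset_Iic_self hi)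
    simp only [hj, hIj]
  · have hIj : ∀ b, restrict I (Function.update s j b) j = restrict I s j := fun b =>
      restrict_dependsOn_Iio hI j fun i hi => Function.update_of_ne (ne_of_lt hi) b s
    simp only [hIj, Function.update_self, hQ]

theorem sum_pathProb_mul_indicator_compatible_eq_one [∀ j, Nonempty (S j)]
    (hI : ∀ j, ∀ i ∈ I j, i < j)
    (hPnonneg : ∀ j ∈ C, ∀ sI sj, 0 ≤ P j sI sj) (hPsum : ∀ j ∈ C, ∀ sI, ∑ sj, P j sI sj = 1)
    {U : Finset (∀ j, S j)} (hU : ∀ s, 0 < pathProb C I P s → s ∈ U) :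
    ∑ s ∈ U, pathProb C I P s * (if Compatible Cᶜ I Z s then 1 else 0) = 1 := by
  have hzero : ∀ s ∉ U, pathProb C I P s = 0 := fun s hs =>
    le_antisymm (not_lt.1 fun hpos => hs (hU s hpos)) (pathProb_nonneg hPnonneg s)
  calc ∑ s ∈ U, pathProb C I P s * (if Compatible Cᶜ I Z s then 1 else 0)
      = ∑ s, pathProb C I P s * (if Compatible Cᶜ I Z s then 1 else 0) :=
        sum_subset (subset_univ U) fun s _ hs => by rw [hzero s hs, zero_mul]
    _ = ∑ s, pathProb univ I (inducedProb C P Z) s :=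
        sum_congr rfl fun s _ => pathProb_mul_indicator_compatible s
    _ = 1 := sum_pathProb_univ_eq_one hI (sum_inducedProb_eq_one hPsum)

theorem card_compatible_le_prod_card (hI : ∀ j, ∀ i ∈ I j, i < j) (U : Finset (∀ j, S j))
    (j : Fin n) (sj : S j) (sI : ∀ i : I j, S i) :
    #{s ∈ U | (s j = sj ∧ restrict I s j = sI) ∧ Compatible Cᶜ I Z s}
      ≤ ∏ k ∈ C \ insert j (I j), Fintype.card (S k) := by
  refine card_le_prod_card_of_dependsOn_Iio (d := fun k s => Z k (restrict I s k))
    (fun k _ s t hst => congrArg (Z k) (restrict_dependsOn_Iio hI k hst)) ?_ ?_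
  · intro s hs k hk
    exact (mem_filter.1 hs).2.2 k (mem_compl.2 hk)
  · intro s hs t ht i hi
    obtain ⟨-, ⟨hsj, hsI⟩, -⟩ := mem_filter.1 hs
    obtain ⟨-, ⟨htj, htI⟩, -⟩ := mem_filter.1 ht
    rcases mem_insert.1 hi with rfl | hi
    · exact hsj.trans htj.symm
    · exact congrFun (hsI.trans htI.symm) ⟨i, hi⟩

theorem sum_indicator_compatible_le (hI : ∀ j, ∀ i ∈ I j, i < j) (U : Finset (∀ j, S j))
    {j : Fin n} (hj : j ∉ C) (sj : S j) (sI : ∀ i : I j, S i) :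
    ∑ s ∈ U with s j = sj ∧ restrict I s j = sI, (if Compatible Cᶜ I Z s then (1 : ℝ) else 0)
      ≤ (min #{s ∈ U | s j = sj ∧ restrict I s j = sI}
            (∏ k ∈ C \ insert j (I j), Fintype.card (S k)) : ℕ)
          * (if Z j sI = sj then 1 else 0) := by
  rw [sum_boole]
  by_cases hz : Z j sI = sj
  · rw [if_pos hz, mul_one, Nat.cast_le]
    refine le_min (card_filter_le _ _) ?_
    rw [filter_filter]
    exact card_compatible_le_prod_card hI U j sj sI
  · have hempty : #{s ∈ {s ∈ U | s j = sj ∧ restrict I s j = sI} | Compatible Cᶜ I Z s} = 0 := by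
      refine card_eq_zero.2 (filter_eq_empty_iff.2 fun s hs hcompat => hz ?_)
      obtain ⟨-, rfl, rfl⟩ := mem_filter.1 hs
      exact hcompat j (mem_compl.2 hj)
    rw [hempty, if_neg hz, Nat.cast_zero, mul_zero]

end InfluenceDiagram

theorem indicator_solution_feasible {n : ℕ}
    (S : Fin n → Type) [∀ j, Fintype (S j)] [∀ j, Nonempty (S j)]
    (C D : Finset (Fin n)) (hCD : Disjoint C D) (hCDunion : C ∪ D = Finset.univ)
    (I : Fin n → Finset (Fin n)) (hI : ∀ j, ∀ i ∈ I j, i < j)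
    (P : ∀ j : Fin n, (∀ i : (I j), S i.1) → S j → ℝ)
    (hPnonneg : ∀ j ∈ C, ∀ (sI : ∀ i : (I j), S i.1) (sj : S j), 0 ≤ P j sI sj)
    (hPsum : ∀ j ∈ C, ∀ sI : ∀ i : (I j), S i.1, ∑ sj : S j, P j sI sj = 1)
    (Sstar : Finset (∀ j, S j))
    (hSstar : ∀ s : ∀ j, S j, 0 < pathProb C I P s → s ∈ Sstar)
    (Z : ∀ j : Fin n, (∀ i : (I j), S i.1) → S j) :
    let x : (∀ j, S j) → ℝ := fun s =>
      if ∀ j ∈ D, Z j (restrict I s j) = s j then 1 else 0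
    (∀ j ∈ D, ∀ sI : ∀ i : (I j), S i.1,
        ∑ sj : S j, (if Z j sI = sj then (1 : ℝ) else 0) = 1) ∧
    (∀ j ∈ D, ∀ (sj : S j) (sI : ∀ i : (I j), S i.1),
        (∑ s ∈ Sstar.filter
            (fun s : ∀ k, S k => s j = sj ∧ restrict I s j = sI), x s)
          ≤ ((min
                (Sstar.filter
                  (fun s : ∀ k, S k => s j = sj ∧ restrict I s j = sI)).card
                (∏ k ∈ C \ insert j (I j), Fintype.card (S k)) : ℕ) : ℝ)
            * (if Z j sI = sj then (1 : ℝ) else 0)) ∧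
    (∑ s ∈ Sstar, pathProb C I P s * x s = 1) ∧
    (∀ s ∈ Sstar, 0 ≤ x s ∧ x s ≤ 1) := by
  obtain rfl : D = Cᶜ := (IsCompl.of_eq (disjoint_iff.1 hCD) hCDunion).compl_eq.symm
  intro x
  refine ⟨fun j _ sI => ?_, fun j hj => ?_, ?_, fun s _ => ?_⟩
  · rw [sum_ite_eq, if_pos (mem_univ _)]
  · exact sum_indicator_compatible_le hI Sstar (mem_compl.1 hj)
  · exact sum_pathProb_mul_indicator_compatible_eq_one hI hPnonneg hPsum hSstar
  · simp only [x]
    split_ifs <;> norm_num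
end
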